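/- arXiv:2202.04026 — 2 statements merged into one kernel-verified Lean document; each statement's English description precedes it below -/
import Mathlib

section
/- Let g : 𝕊ⁿ → ℝ be convex, let X* be a minimizer of g over S_n with rank(X*) = r*, and let G* ∈ ∂g(X*) satisfy ⟨X − X*, G*⟩ ≥ 0 for all X ∈ S_n. For any η ≥ 0, the eigenvalues of P* = X* − η·G* (in nonincreasing order) are: λ_i(P*) = λ_i(X*) − η·λ_n(G*) for 1 ≤ i ≤ r*, and λ_i(P*) = −η·λ_{n−i+1}(G*) for r* < i ≤ n. In particular, if r̃ denotes the multiplicity of λ_n(G*), then Σ_{i=1}^{r̃} λ_i(P*) = 1 − η·r̃·λ_n(G*). -/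
open scoped BigOperators RealInnerProductSpace
open Matrix

noncomputable section

abbrev Mat (n : ℕ) := Matrix (Fin n) (Fin n) ℝ
abbrev Vec (m : ℕ) := EuclideanSpace ℝ (Fin m)

/-- Trace inner product `⟨A,B⟩ = Tr(AB)`. -/
def mip {n : ℕ} (A B : Mat n) : ℝ := (A * B).trace

/-- Frobenius norm. -/
def frob {n : ℕ} (A : Mat n) : ℝ := Real.sqrt (∑ i, ∑ j, (A i j) ^ 2)

/-- The set of symmetric `n × n` real matrices (the space `𝕊ⁿ`). -/
def SymM (n : ℕ) : Set (Mat n) := {X | X.IsSymm}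

/-- The spectrahedron `S_n`. -/
def Spectra (n : ℕ) : Set (Mat n) := {X | X.trace = 1 ∧ X.PosSemidef}

/-- `lam A k` : the `k`-th largest eigenvalue of a symmetric matrix `A` (1-indexed,
so `lam A 1 = λ₁(A)` is the largest and `lam A n = λₙ(A)` is the smallest);
junk value otherwise. -/
def lam {n : ℕ} (A : Mat n) (k : ℕ) : ℝ :=
  if h : k - 1 < n then
    if hA : A.IsHermitian then
      hA.eigenvalues (Tuple.sort hA.eigenvalues (Fin.rev ⟨k - 1, h⟩))
    else 0
  else 0

/-- Multiplicity of the smallest eigenvalue of `A`. -/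
def multMin {n : ℕ} (A : Mat n) : ℕ :=
  letI := Classical.decPred fun k : ℕ => lam A k = lam A n
  ((Finset.Icc 1 n).filter fun k => lam A k = lam A n).card

/-- Subdifferential of `g : 𝕊ⁿ → ℝ` at `X`. -/
def subdiff {n : ℕ} (g : Mat n → ℝ) (X : Mat n) : Set (Mat n) :=
  {G | G.IsSymm ∧ ∀ Y ∈ SymM n, g Y ≥ g X + mip G (Y - X)}

/-- Euclidean (Frobenius-norm) projection onto `C ⊆ 𝕊ⁿ`. -/
def mproj {n : ℕ} (C : Set (Mat n)) (X : Mat n) : Mat n :=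
  Classical.epsilon fun P => P ∈ C ∧ ∀ Q ∈ C, frob (X - P) ≤ frob (X - Q)

/-- Euclidean projection onto `C ⊆ ℝᵐ`. -/
def vproj {m : ℕ} (C : Set (Vec m)) (x : Vec m) : Vec m :=
  Classical.epsilon fun p => p ∈ C ∧ ∀ q ∈ C, ‖x - p‖ ≤ ‖x - q‖

/-- Norm on the product space `𝕊ⁿ × ℝᵐ`. -/
def pnorm {n m : ℕ} (X : Mat n) (y : Vec m) : ℝ := Real.sqrt (frob X ^ 2 + ‖y‖ ^ 2)


/-- zero-indexed ordered eigenvalues -/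
def LL {n : ℕ} (A : Mat n) (i : Fin n) : ℝ := lam A (i + 1)

lemma LL_eq {n : ℕ} {A : Mat n} (hA : A.IsHermitian) (i : Fin n) :
    LL A i = hA.eigenvalues (Tuple.sort hA.eigenvalues (Fin.rev i)) := by
  unfold LL lam
  have h : (i : ℕ) + 1 - 1 < n := by omega
  rw [dif_pos h, dif_pos hA]
  rfl

lemma LL_anti {n : ℕ} {A : Mat n} (hA : A.IsHermitian) : Antitone (LL A) := by
  intro i j hij
  rw [LL_eq hA, LL_eq hA]
  exact Tuple.monotone_sort hA.eigenvalues (Fin.rev_le_rev.2 hij)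

lemma LL_perm {n : ℕ} {A : Mat n} (hA : A.IsHermitian) :
    ∃ σ : Equiv.Perm (Fin n), LL A = hA.eigenvalues ∘ σ :=
  ⟨Fin.revPerm.trans (Tuple.sort hA.eigenvalues), by
    funext i; rw [LL_eq hA]; rfl⟩

lemma LL_det {n : ℕ} {A : Mat n} (hA : A.IsHermitian) (t : ℝ) :
    (t • (1 : Mat n) - A).det = ∏ i, (t - LL A i) := by
  obtain ⟨σ, hσ⟩ := LL_perm hA
  have h1 := Matrix.eval_charpoly A t
  rw [hA.charpoly_eq, Polynomial.eval_prod] at h1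
  rw [hσ, show t • (1 : Mat n) = Matrix.scalar (Fin n) t by
    ext i j; simp [Matrix.one_apply, Matrix.diagonal_apply], ← h1]
  simp only [Function.comp]
  rw [Equiv.prod_comp σ (fun i => t - hA.eigenvalues i)]
  simp

lemma anti_unique {n : ℕ} {f g : Fin n → ℝ} (hf : Antitone f) (hg : Antitone g)
    (h : ∀ t : ℝ, ∏ i, (t - f i) = ∏ i, (t - g i)) : f = g := by
  have hp : ∏ i, (Polynomial.X - Polynomial.C (f i)) = ∏ i, (Polynomial.X - Polynomial.C (g i)) := by
    apply Polynomial.funext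
    intro t
    simpa [Polynomial.eval_prod] using h t
  have hr : ∀ f : Fin n → ℝ, (∏ i, (Polynomial.X - Polynomial.C (f i))).roots
      = ((List.ofFn f : List ℝ) : Multiset ℝ) := by
    intro f
    rw [Polynomial.roots_prod _ _
      (by simp [Finset.prod_ne_zero_iff, Polynomial.X_sub_C_ne_zero])]
    simp [← Fin.univ_val_map]
  have h2 := hr f
  rw [hp, hr g] at h2
  apply List.ofFn_injective
  exact (Multiset.coe_eq_coe.1 h2.symm).eq_of_pairwise' hf.sortedGE_ofFn.pairwise
    hg.sortedGE_ofFn.pairwise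

lemma LL_unique {n : ℕ} {A : Mat n} (hA : A.IsHermitian) {f : Fin n → ℝ} (hf : Antitone f)
    (h : ∀ t : ℝ, (t • (1 : Mat n) - A).det = ∏ i, (t - f i)) : LL A = f :=
  anti_unique (LL_anti hA) hf fun t => by rw [← LL_det hA, h]

lemma det_affine {n : ℕ} {A : Mat n} (hA : A.IsHermitian) (c d t : ℝ) :
    (t • (1 : Mat n) - (c • A + d • 1)).det = ∏ i, (t - (c * LL A i + d)) := by
  by_cases hc : c = 0
  · subst hc
    rw [show t • (1 : Mat n) - ((0:ℝ) • A + d • 1) = (t - d) • 1 by module]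
    simp [Matrix.det_smul]
  · rw [show t • (1 : Mat n) - (c • A + d • 1) = c • (((t - d) / c) • 1 - A) by
      rw [smul_sub, smul_smul, mul_div_cancel₀ _ hc]; module]
    rw [Matrix.det_smul, LL_det hA, Fintype.card_fin]
    conv_lhs => rw [← Fin.prod_const, ← Finset.prod_mul_distrib]
    refine Finset.prod_congr rfl fun i _ => ?_
    field_simp
    ring

lemma card_LL {n : ℕ} {A : Mat n} (hA : A.IsHermitian) :
    A.rank = (Finset.univ.filter fun i => LL A i ≠ 0).card := by
  obtain ⟨σ, hσ⟩ := LL_perm hA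
  rw [hA.rank_eq_card_non_zero_eigs, Fintype.card_subtype, hσ]
  symm
  apply Finset.card_bij (fun i _ => σ i)
  · simp
  · intro a _ b _ h; exact σ.injective h
  · intro b hb; exact ⟨σ.symm b, by simpa using hb, by simp⟩

lemma LL_nonneg {n : ℕ} {A : Mat n} (hA : A.PosSemidef) (i : Fin n) : 0 ≤ LL A i := by
  rw [LL_eq hA.1]; exact hA.eigenvalues_nonneg _

lemma psd_of_LL {n : ℕ} {A : Mat n} (hA : A.IsHermitian) (h : ∀ i, 0 ≤ LL A i) :
    A.PosSemidef := by
  obtain ⟨σ, hσ⟩ := LL_perm hA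
  rw [hA.posSemidef_iff_eigenvalues_nonneg]
  intro i
  have := h (σ.symm i)
  rw [hσ] at this
  simpa using this

lemma LL_trace {n : ℕ} {A : Mat n} (hA : A.IsHermitian) : A.trace = ∑ i, LL A i := by
  obtain ⟨σ, hσ⟩ := LL_perm hA
  rw [hA.trace_eq_sum_eigenvalues, hσ]
  simp only [Function.comp]
  rw [Equiv.sum_comp σ (fun i => hA.eigenvalues i)]
  simp

open scoped MatrixOrder Matrix.Norms.L2Operator in
lemma mul_zero_of_trace {n : ℕ} {A B : Mat n} (hA : A.PosSemidef) (hB : B.PosSemidef)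
    (h : (A * B).trace ≤ 0) : A * B = 0 := by
  obtain ⟨C, rfl⟩ := CStarAlgebra.nonneg_iff_eq_star_mul_self.1 hA.nonneg
  obtain ⟨D, rfl⟩ := CStarAlgebra.nonneg_iff_eq_star_mul_self.1 hB.nonneg
  simp only [Matrix.star_eq_conjTranspose] at *
  have e : (Cᴴ * C * (Dᴴ * D)).trace = ((C * Dᴴ) * (C * Dᴴ)ᴴ).trace := by
    rw [Matrix.conjTranspose_mul, Matrix.conjTranspose_conjTranspose, Matrix.mul_assoc,
      Matrix.trace_mul_comm]
    simp only [Matrix.mul_assoc]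
  have h0 : 0 ≤ ((C * Dᴴ) * (C * Dᴴ)ᴴ).trace :=
    (Matrix.posSemidef_self_mul_conjTranspose (C * Dᴴ)).trace_nonneg
  have h1 : C * Dᴴ = 0 := Matrix.trace_mul_conjTranspose_self_eq_zero_iff.1
    (le_antisymm (e ▸ h) h0)
  rw [Matrix.mul_assoc, ← Matrix.mul_assoc C, h1]
  simp

lemma exists_test {n : ℕ} {G : Mat n} (hG : G.IsHermitian) (k : Fin n) :
    ∃ Y ∈ Spectra n, mip Y G = LL G k := by
  set j := Tuple.sort hG.eigenvalues (Fin.rev k) with hj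
  set v : Fin n → ℝ := ⇑(hG.eigenvectorBasis j) with hv
  have h1 : v ⬝ᵥ v = 1 := by
    have := hG.eigenvectorBasis.orthonormal.1 j
    have h2 := EuclideanSpace.real_norm_sq_eq (hG.eigenvectorBasis j)
    rw [this] at h2
    simp only [dotProduct, hv]
    rw [one_pow] at h2
    rw [h2]
    exact Finset.sum_congr rfl fun i _ => (sq _).symm
  refine ⟨vecMulVec v v, ⟨?_, ?_⟩, ?_⟩
  · rw [Matrix.trace_vecMulVec, h1]
  · simpa using Matrix.posSemidef_vecMulVec_self_star v
  · have h3 : G *ᵥ v = hG.eigenvalues j • v := hG.mulVec_eigenvectorBasis j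
    unfold mip
    rw [Matrix.trace_mul_comm, Matrix.mul_vecMulVec, Matrix.trace_vecMulVec, h3, smul_dotProduct, h1,
      LL_eq hG]
    simp [hj]

lemma core {n : ℕ} (hn : 2 ≤ n) (Xs : Mat n) (hX : Xs ∈ Spectra n)
    (G : Mat n) (hG : G.IsHermitian) (hfo : ∀ X ∈ Spectra n, mip (X - Xs) G ≥ 0)
    (η : ℝ) (hη : 0 ≤ η) :
    (∀ i : Fin n, LL (Xs - η • G) i = LL Xs i - η * LL G (Fin.rev i)) ∧
    (∀ i : Fin n, Xs.rank ≤ i → LL Xs i = 0) ∧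
    (∀ i : Fin n, (i : ℕ) < Xs.rank → LL G (Fin.rev i) = lam G n) := by
  obtain ⟨htr, hpsd⟩ := hX
  have hXh := hpsd.1
  set k : Fin n := ⟨n - 1, by omega⟩ with hk
  set μ := lam G n with hμ
  have hkμ : LL G k = μ := by
    simp only [LL, hk, hμ]; congr 1; omega
  have hge : ∀ i, μ ≤ LL G i := fun i => by
    rw [← hkμ]; apply LL_anti hG; rw [Fin.le_def]; simp only [hk]; omega
  have hHh : ((1:ℝ) • G + (-μ) • (1 : Mat n)).IsHermitian := by
    apply IsHermitian.add
    · simpa using hG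
    · ext i j; simp [Matrix.one_apply, eq_comm]; split_ifs <;> simp
  have hLH : LL ((1:ℝ) • G + (-μ) • (1 : Mat n)) = fun i => 1 * LL G i + (-μ) := by
    apply LL_unique hHh
    · intro i j hij; have := LL_anti hG hij; simp only []; linarith
    · intro t; exact det_affine hG _ _ t
  set H := (1:ℝ) • G + (-μ) • (1 : Mat n) with hH
  have hHp : H.PosSemidef := psd_of_LL hHh fun i => by
    rw [hLH]; have := hge i; simp only []; linarith
  have hXH : Xs * H = 0 := by
    apply mul_zero_of_trace hpsd hHp
    obtain ⟨Y, hY, hYG⟩ := exists_test hG k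
    have := hfo Y hY
    simp only [mip, Matrix.sub_mul, Matrix.trace_sub] at this hYG
    rw [hH]
    simp only [one_smul, Matrix.mul_add, Matrix.mul_smul, Matrix.mul_one, Matrix.trace_add,
      Matrix.trace_smul, htr, smul_eq_mul]
    linarith
  have hrk : Xs.rank + H.rank ≤ n := by
    simpa using Matrix.rank_add_rank_le_card_of_mul_eq_zero hXH
  have hX0 : ∀ i : Fin n, Xs.rank ≤ i → LL Xs i = 0 := by
    intro i hi
    rw [card_LL hXh] at hi
    by_contra hne
    have hpos : 0 < LL Xs i := lt_of_le_of_ne (LL_nonneg hpsd i) (Ne.symm hne)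
    have h1 := (Tuple.lt_card_gt_iff_apply_gt_of_antitone (LL_anti hXh) (j := i) (a := 0)).2 hpos
    have h2 := Finset.card_le_card (s := Finset.univ.filter fun i => 0 < LL Xs i)
      (t := Finset.univ.filter fun i => LL Xs i ≠ 0) (by
        intro x hx; simp at hx ⊢; exact hx.ne')
    omega
  have hG0 : ∀ i : Fin n, (i : ℕ) < Xs.rank → LL G (Fin.rev i) = μ := by
    intro i hi
    by_contra hne
    have hpos : μ < LL G (Fin.rev i) := lt_of_le_of_ne (hge _) (Ne.symm hne)
    have h1 := (Tuple.lt_card_gt_iff_apply_gt_of_antitone (LL_anti hG) (j := Fin.rev i)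
      (a := μ)).2 hpos
    have h2 := Finset.card_le_card (s := Finset.univ.filter fun i => μ < LL G i)
      (t := Finset.univ.filter fun i => LL H i ≠ 0) (by
        intro x hx; simp [hLH] at hx ⊢; intro h; linarith)
    rw [← card_LL hHh] at h2
    rw [Fin.val_rev] at h1
    omega
  refine ⟨?_, hX0, hG0⟩
  have hPh : (Xs - η • G).IsHermitian := by
    apply IsHermitian.sub hXh
    have : Gᴴ = G := hG
    show (η • G)ᴴ = η • G
    rw [Matrix.conjTranspose_smul, this]; simp
  refine fun i => congrFun (LL_unique hPh (f := fun i => LL Xs i - η * LL G (Fin.rev i)) ?_ ?_) i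
  · intro i j hij
    have h1 := LL_anti hXh hij
    have h2 := mul_le_mul_of_nonneg_left (LL_anti hG (Fin.rev_le_rev.2 hij)) hη
    simp only []
    linarith
  · -- polynomial identity, cancelled at the polynomial level
    have key : ∀ s : ℝ, s ^ n * (s • (1 : Mat n) - (Xs - η • H)).det
        = s ^ n * ∏ i, (s - (LL Xs i - η * (LL G (Fin.rev i) - μ))) := by
      intro s
      have e1 : (s • (1 : Mat n) - Xs) * (s • (1 : Mat n) - ((-η) • G + (η * μ) • 1))
          = s • (s • (1 : Mat n) - (Xs - η • H)) := by
        have e2 : (-η) • G + (η * μ) • (1 : Mat n) = (-η) • H := by rw [hH]; module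
        rw [e2]
        simp only [Matrix.sub_mul, Matrix.mul_sub, Matrix.mul_smul, hXH, Matrix.smul_mul,
          Matrix.one_mul, Matrix.mul_one]
        module
      have e3 := congrArg Matrix.det e1
      rw [Matrix.det_mul, Matrix.det_smul, LL_det hXh, det_affine hG, Fintype.card_fin] at e3
      rw [← e3, ← Equiv.prod_comp Fin.revPerm (fun i => s - (-η * LL G i + η * μ)),
        ← Fin.prod_const, ← Finset.prod_mul_distrib, ← Finset.prod_mul_distrib]
      refine Finset.prod_congr rfl fun i _ => ?_
      simp only [Fin.revPerm_apply]
      rcases lt_or_ge (i : ℕ) Xs.rank with h | h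
      · rw [hG0 i h]; ring
      · rw [hX0 i h]; ring
    have key2 : (Xs - η • H).charpoly
        = ∏ i, (Polynomial.X - Polynomial.C (LL Xs i - η * (LL G (Fin.rev i) - μ))) := by
      apply mul_left_cancel₀ (pow_ne_zero n (Polynomial.X_ne_zero (R := ℝ)))
      apply Polynomial.funext
      intro s
      have := key s
      rw [Polynomial.eval_mul, Polynomial.eval_mul, Matrix.eval_charpoly,
        ← show s • (1 : Mat n) = Matrix.scalar (Fin n) s by
          ext i j; simp [Matrix.one_apply, Matrix.diagonal_apply]]
      simpa [Polynomial.eval_prod] using this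
    intro t
    have := congrArg (Polynomial.eval (t + η * μ)) key2
    rw [Matrix.eval_charpoly, ← show (t + η * μ) • (1 : Mat n) = Matrix.scalar (Fin n) (t + η * μ) by
          ext i j; simp [Matrix.one_apply, Matrix.diagonal_apply], Polynomial.eval_prod] at this
    rw [show t • (1 : Mat n) - (Xs - η • G) = (t + η * μ) • (1 : Mat n) - (Xs - η • H) by
      rw [hH]; module, this]
    refine Finset.prod_congr rfl fun i _ => ?_
    simp
    ring

theorem stmt_17 {n : ℕ} (hn : 2 ≤ n) (g : Mat n → ℝ)
    (hg : ConvexOn ℝ (SymM n) g)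
    (Xs : Mat n) (hXsS : Xs ∈ Spectra n)
    (hmin : ∀ X ∈ Spectra n, g Xs ≤ g X)
    (rs : ℕ) (hrank : Xs.rank = rs)
    (G : Mat n) (hG : G ∈ subdiff g Xs)
    (hfo : ∀ X ∈ Spectra n, mip (X - Xs) G ≥ 0)
    (η : ℝ) (hη : 0 ≤ η) :
    (∀ i : ℕ, 1 ≤ i → i ≤ rs → lam (Xs - η • G) i = lam Xs i - η * lam G n) ∧
    (∀ i : ℕ, rs < i → i ≤ n → lam (Xs - η • G) i = -(η * lam G (n - i + 1))) ∧
    (∑ i ∈ Finset.Icc 1 (multMin G), lam (Xs - η • G) i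
      = 1 - η * (multMin G : ℝ) * lam G n) := by
  have hGh : G.IsHermitian := by
    have := hG.1
    simpa [Matrix.IsHermitian, Matrix.IsSymm] using this
  obtain ⟨h1, h2, h3⟩ := core hn Xs hXsS G hGh hfo η hη
  have hXh := hXsS.2.1
  have htr := hXsS.1
  subst hrank
  have hrn : Xs.rank ≤ n := by simpa using Matrix.rank_le_card_width Xs
  have conv : ∀ (A : Mat n) (i : ℕ) (h : 1 ≤ i) (h' : i ≤ n),
      lam A i = LL A ⟨i - 1, by omega⟩ := by
    intro A i h h'; simp only [LL]; congr 1; omega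
  have convr : ∀ (A : Mat n) (i : ℕ) (h : 1 ≤ i) (h' : i ≤ n),
      lam A (n - i + 1) = LL A (Fin.rev ⟨i - 1, by omega⟩) := by
    intro A i h h'; simp only [LL, Fin.val_rev]; congr 1; omega
  refine ⟨?_, ?_, ?_⟩
  · intro i hi hir
    rw [conv _ i hi (by omega), conv _ i hi (by omega), h1, h3]
    show i - 1 < Xs.rank
    omega
  · intro i hi hin
    rw [conv _ i (by omega) hin, convr _ i (by omega) hin, h1, h2]
    · ring
    · show Xs.rank ≤ i - 1
      omega
  · set p : Fin n → Prop := fun i => LL G (Fin.rev i) = lam G n with hp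
    classical
    have hkμ : LL G ⟨n - 1, by omega⟩ = lam G n := (conv G n (by omega) le_rfl).symm
    have hmc : multMin G = (Finset.univ.filter p).card := by
      unfold multMin
      symm
      apply Finset.card_bij (fun (i : Fin n) _ => n - (i : ℕ))
      · intro i hi
        have := i.2
        simp only [hp, Finset.mem_filter, Finset.mem_univ, true_and, LL, Fin.val_rev] at hi
        simp only [Finset.mem_filter, Finset.mem_Icc]
        refine ⟨by omega, ?_⟩
        rw [← hi]; congr 1; omega
      · intro a _ b _ h; ext; omega
      · intro b hb
        simp only [Finset.mem_filter, Finset.mem_Icc] at hb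
        refine ⟨⟨n - b, by omega⟩, ?_, by simp only []; omega⟩
        simp only [hp, Finset.mem_filter, Finset.mem_univ, true_and, LL, Fin.val_rev]
        rw [← hb.2]; congr 1; omega
    have hlt : ∀ j : Fin n, (j : ℕ) < multMin G ↔ p j := by
      intro j
      rw [hmc]
      apply Fin.lt_card_filter_univ_iff_apply_of_imp
      intro b a hba hb
      change LL G (Fin.rev b) = lam G n at hb
      show LL G (Fin.rev a) = lam G n
      apply le_antisymm
      · rw [← hb]; apply LL_anti hGh; apply Fin.rev_le_rev.2; grind
      · rw [← hkμ]; apply LL_anti hGh; rw [Fin.le_def, Fin.val_rev]; simp only []; omega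
    have hmn : multMin G ≤ n := by
      rw [hmc]; simpa using Finset.card_filter_le (Finset.univ : Finset (Fin n)) p
    have hrm : ∀ j : Fin n, ¬ p j → LL Xs j = 0 := by
      intro j hj
      apply h2
      by_contra hlt'
      exact hj (h3 j (by omega))
    have hsum : ∑ i ∈ Finset.Icc 1 (multMin G), lam (Xs - η • G) i
        = ∑ j ∈ Finset.univ.filter p, LL (Xs - η • G) j := by
      symm
      apply Finset.sum_bij (fun (i : Fin n) _ => (i : ℕ) + 1)
      · intro a ha
        simp only [Finset.mem_filter, Finset.mem_univ, true_and, ← hlt] at ha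
        simp only [Finset.mem_Icc]; omega
      · intro a _ b _ h; ext; omega
      · intro b hb
        simp only [Finset.mem_Icc] at hb
        refine ⟨⟨b - 1, by omega⟩, ?_, by simp only []; omega⟩
        simp only [Finset.mem_filter, Finset.mem_univ, true_and, ← hlt]
        omega
      · intro a _; rfl
    rw [hsum]
    have : ∑ j ∈ Finset.univ.filter p, LL (Xs - η • G) j
        = ∑ j ∈ Finset.univ.filter p, (LL Xs j - η * lam G n) := by
      refine Finset.sum_congr rfl fun j hj => ?_
      have hj' : p j := (Finset.mem_filter.1 hj).2
      rw [h1, show LL G (Fin.rev j) = lam G n from hj']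
    rw [this, Finset.sum_sub_distrib, Finset.sum_const, ← hmc, Finset.sum_filter_of_ne (p := p)
      (fun j _ hne => by by_contra hj; exact hne (hrm j hj)), ← LL_trace hXh, htr, nsmul_eq_mul]
    ring
end
end

section
/- Let P ∈ 𝕊ⁿ and 1 ≤ r ≤ n−1. If Σ_{i=1}^r λ_i(P) − r·λ_{r+1}(P) ≥ 1, then rank( Π_{S_n}[P] ) ≤ r. -/
open scoped BigOperators RealInnerProductSpace
open Matrix

noncomputable section

lemma cross_nonneg {n : ℕ} (U : Mat n) (hU : Uᴴ * U = 1) (hU' : U * Uᴴ = 1) (l x : Fin n → ℝ)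
    (θ : ℝ) (hx : ∀ i, x i = max (l i - θ) 0) (hs : ∑ i, x i = 1) (Q : Mat n)
    (hQ : Q ∈ Spectra n) :
    0 ≤ ((U * diagonal l * Uᴴ - U * diagonal x * Uᴴ) * (U * diagonal x * Uᴴ - Q)).trace := by
  obtain ⟨hQt, hQp⟩ := hQ
  have hq : ∀ i, 0 ≤ (Uᴴ * Q * U) i i := fun i =>
    (hQp.conjTranspose_mul_mul_same U).diag_nonneg
  have hqs : ∑ i, (Uᴴ * Q * U) i i = 1 := by
    have : (Uᴴ * Q * U).trace = 1 := by
      rw [Matrix.mul_assoc, Matrix.trace_mul_comm, Matrix.mul_assoc, hU', Matrix.mul_one, hQt]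
    simpa [Matrix.trace] using this
  have hN : U * diagonal l * Uᴴ - U * diagonal x * Uᴴ = U * diagonal (fun i => l i - x i) * Uᴴ := by
    rw [← Matrix.sub_mul, ← Matrix.mul_sub, Matrix.diagonal_sub]
  have key : ∀ Y : Mat n, ((U * diagonal (fun i => l i - x i) * Uᴴ) * Y).trace
      = ∑ i, (l i - x i) * (Uᴴ * Y * U) i i := by
    intro Y
    have : ((U * diagonal (fun i => l i - x i) * Uᴴ) * Y).trace
        = (diagonal (fun i => l i - x i) * (Uᴴ * Y * U)).trace := by
      rw [Matrix.mul_assoc, Matrix.mul_assoc, Matrix.trace_mul_comm]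
      simp only [Matrix.mul_assoc]
    rw [this]
    simp [Matrix.trace, Matrix.diagonal_mul]
  have hX : Uᴴ * (U * diagonal x * Uᴴ) * U = diagonal x := by
    calc Uᴴ * (U * diagonal x * Uᴴ) * U = (Uᴴ * U) * diagonal x * (Uᴴ * U) := by
          simp only [Matrix.mul_assoc]
      _ = _ := by rw [hU]; simp
  rw [hN, Matrix.mul_sub, Matrix.trace_sub, key, key, hX]
  have h1 : ∑ i, (l i - x i) * (diagonal x : Mat n) i i = θ := by
    calc _ = ∑ i, θ * x i := by
          refine Finset.sum_congr rfl fun i _ => ?_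
          rw [Matrix.diagonal_apply_eq, hx i]
          rcases le_total (l i - θ) 0 with h | h
          · simp [max_eq_right h]
          · rw [max_eq_left h]; ring
      _ = θ := by rw [← Finset.mul_sum, hs, mul_one]
  have h2 : ∑ i, (l i - x i) * (Uᴴ * Q * U) i i ≤ θ := by
    calc _ ≤ ∑ i, θ * (Uᴴ * Q * U) i i := by
          refine Finset.sum_le_sum fun i _ => mul_le_mul_of_nonneg_right ?_ (hq i)
          have := le_max_left (l i - θ) 0
          rw [hx i]; linarith
      _ = θ := by rw [← Finset.mul_sum, hqs, mul_one]
  linarith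

lemma frob_pyth {n : ℕ} (P X Q : Mat n) (hX : X.IsSymm) (hQ : Q.IsSymm)
    (h : 0 ≤ ((P - X) * (X - Q)).trace) :
    (∑ i, ∑ j, ((P - X) i j) ^ 2) + (∑ i, ∑ j, ((X - Q) i j) ^ 2)
      ≤ ∑ i, ∑ j, ((P - Q) i j) ^ 2 := by
  have ht : ((P - X) * (X - Q)).trace = ∑ i, ∑ j, (P - X) i j * (X - Q) i j := by
    simp only [Matrix.trace, Matrix.diag_apply, Matrix.mul_apply]
    refine Finset.sum_congr rfl fun i _ => Finset.sum_congr rfl fun j _ => ?_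
    rw [(hX.sub hQ).apply i j]
  have : ∑ i, ∑ j, ((P - Q) i j) ^ 2 = (∑ i, ∑ j, ((P - X) i j) ^ 2)
      + (∑ i, ∑ j, ((X - Q) i j) ^ 2) + 2 * ∑ i, ∑ j, (P - X) i j * (X - Q) i j := by
    simp only [Finset.mul_sum, ← Finset.sum_add_distrib]
    refine Finset.sum_congr rfl fun i _ => Finset.sum_congr rfl fun j _ => ?_
    simp only [Matrix.sub_apply]; ring
  rw [this, ← ht]; linarith

lemma mproj_eq {n : ℕ} (P X : Mat n) (hX : X ∈ Spectra n)
    (h : ∀ Q ∈ Spectra n, 0 ≤ ((P - X) * (X - Q)).trace) : mproj (Spectra n) P = X := by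
  have hsym : ∀ Y ∈ Spectra n, Y.IsSymm := fun Y hY => by
    have := hY.2.1
    rwa [Matrix.IsHermitian, Matrix.conjTranspose_eq_transpose_of_trivial] at this
  have hp := fun Q hQ => frob_pyth P X Q (hsym X hX) (hsym Q hQ) (h Q hQ)
  have hex : ∃ Y, Y ∈ Spectra n ∧ ∀ Q ∈ Spectra n, frob (P - Y) ≤ frob (P - Q) := by
    refine ⟨X, hX, fun Q hQ => Real.sqrt_le_sqrt ?_⟩
    have := hp Q hQ
    have h0 : 0 ≤ ∑ i, ∑ j, ((X - Q) i j) ^ 2 :=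
      Finset.sum_nonneg fun i _ => Finset.sum_nonneg fun j _ => sq_nonneg _
    linarith
  obtain ⟨hY, hmin⟩ := Classical.epsilon_spec hex
  change mproj (Spectra n) P ∈ Spectra n at hY
  change ∀ Q ∈ Spectra n, frob (P - mproj (Spectra n) P) ≤ frob (P - Q) at hmin
  set Y := mproj (Spectra n) P
  have h1 := hmin X hX
  have h2 := hp Y hY
  unfold frob at h1
  have h1 := (Real.sqrt_le_sqrt_iff
    (Finset.sum_nonneg fun i _ => Finset.sum_nonneg fun j _ => sq_nonneg _)).1 h1
  have h3 : ∑ i, ∑ j, ((X - Y) i j) ^ 2 ≤ 0 := by linarith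
  have h4 := le_antisymm h3
    (Finset.sum_nonneg fun i _ => Finset.sum_nonneg fun j _ => sq_nonneg _)
  ext i j
  have h4' := (Finset.sum_eq_zero_iff_of_nonneg
    (fun i _ => Finset.sum_nonneg fun j _ => sq_nonneg _)).1 h4
  have h5 := (Finset.sum_eq_zero_iff_of_nonneg (fun j _ => sq_nonneg _)).1
    (h4' i (Finset.mem_univ _))
  have h6 := pow_eq_zero_iff (two_ne_zero) |>.1 (h5 j (Finset.mem_univ _))
  rw [Matrix.sub_apply] at h6
  linarith

theorem stmt_18 {n : ℕ} (hn : 2 ≤ n)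
    (P : Mat n) (hP : P.IsSymm)
    (r : ℕ) (hr1 : 1 ≤ r) (hr2 : r ≤ n - 1)
    (hcond : (∑ i ∈ Finset.Icc 1 r, lam P i) - (r : ℝ) * lam P (r + 1) ≥ 1) :
    (mproj (Spectra n) P).rank ≤ r := by
  have hH : P.IsHermitian := by
    rw [Matrix.IsHermitian, Matrix.conjTranspose_eq_transpose_of_trivial]; exact hP
  set l := hH.eigenvalues with hl
  set e : Equiv.Perm (Fin n) := Fin.revPerm.trans (Tuple.sort l) with he
  have hlam : ∀ k : Fin n, lam P (k + 1) = l (e k) := by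
    intro k
    simp [lam, hP, he, hl]
  have hanti : ∀ a b : Fin n, a ≤ b → l (e b) ≤ l (e a) := by
    intro a b hab
    exact Tuple.monotone_sort l (Fin.rev_le_rev.2 hab)
  have hrn : r < n := by omega
  set kr : Fin n := ⟨r, hrn⟩ with hkr
  set F : ℝ → ℝ := fun θ => ∑ i, max (l i - θ) 0 with hF
  have hFe : ∀ θ, F θ = ∑ k, max (l (e k) - θ) 0 := fun θ =>
    (Equiv.sum_comp e (fun i => max (l i - θ) 0)).symm
  have hFr : 1 ≤ F (l (e kr)) := by
    refine le_trans hcond ?_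
    have h1 : F (l (e kr)) = ∑ i ∈ Finset.range n, max (lam P (i + 1) - l (e kr)) 0 := by
      rw [hFe, Finset.sum_range]
      simp only [hlam]
    have h2 : (∑ i ∈ Finset.Icc 1 r, lam P i) = ∑ i ∈ Finset.range r, lam P (i + 1) := by
      rw [Finset.range_eq_Ico, Finset.sum_Ico_add' (fun i => lam P i) 0 r 1]
      rfl
    have h3 : lam P (r + 1) = l (e kr) := hlam kr
    rw [h1, h2, h3]
    calc _ = ∑ i ∈ Finset.range r, (lam P (i + 1) - l (e kr)) := by simp
      _ ≤ ∑ i ∈ Finset.range r, max (lam P (i + 1) - l (e kr)) 0 :=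
          Finset.sum_le_sum fun i _ => le_max_left _ _
      _ ≤ _ := Finset.sum_le_sum_of_subset_of_nonneg
          (Finset.range_subset_range.2 hrn.le) fun i _ _ => le_max_right _ _
  have hF0 : F (l (e ⟨0, by omega⟩)) = 0 := by
    rw [hFe]
    refine Finset.sum_eq_zero fun k _ => max_eq_right ?_
    have := hanti ⟨0, by omega⟩ k (Fin.mk_le_of_le_val (Nat.zero_le _))
    linarith
  have hcont : Continuous F := by fun_prop
  obtain ⟨θ, ⟨hθ, -⟩, hFθ⟩ := intermediate_value_Icc'
    (hanti ⟨0, by omega⟩ kr (Fin.mk_le_of_le_val (Nat.zero_le _)))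
    hcont.continuousOn (show (1 : ℝ) ∈ Set.Icc _ _ from ⟨by rw [hF0]; exact zero_le_one, hFr⟩)
  set U : Mat n := (hH.eigenvectorUnitary : Mat n) with hUdef
  have hU : Uᴴ * U = 1 := Unitary.coe_star_mul_self hH.eigenvectorUnitary
  have hU' : U * Uᴴ = 1 := Unitary.coe_mul_star_self hH.eigenvectorUnitary
  have hPU : P = U * diagonal l * Uᴴ := by
    have := hH.spectral_theorem
    rw [Unitary.conjStarAlgAut_apply] at this
    exact this
  set x : Fin n → ℝ := fun i => max (l i - θ) 0 with hx
  have hX : U * diagonal x * Uᴴ ∈ Spectra n := by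
    constructor
    · rw [Matrix.mul_assoc, Matrix.trace_mul_comm, Matrix.mul_assoc, hU, Matrix.mul_one,
        Matrix.trace_diagonal]
      exact hFθ
    · exact (Matrix.posSemidef_diagonal_iff.2 fun i => le_max_right _ _).mul_mul_conjTranspose_same U
  have hproj : mproj (Spectra n) P = U * diagonal x * Uᴴ := by
    refine mproj_eq P _ hX fun Q hQ => ?_
    have := cross_nonneg U hU hU' l x θ (fun i => rfl) hFθ Q hQ
    rwa [← hPU] at this
  rw [hproj]
  refine (Matrix.rank_mul_le_left _ _).trans ((Matrix.rank_mul_le_right _ _).trans ?_)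
  rw [Matrix.rank_diagonal]
  have hlt : ∀ i : {i // x i ≠ 0}, ((e.symm i.1 : Fin n) : ℕ) < r := by
    rintro ⟨i, hi⟩
    by_contra hcon
    apply hi
    have := hanti kr (e.symm i) (Fin.mk_le_of_le_val (not_lt.1 hcon))
    rw [Equiv.apply_symm_apply] at this
    exact max_eq_right (by linarith)
  have hinj : Function.Injective (fun i : {i // x i ≠ 0} => (⟨_, hlt i⟩ : Fin r)) := by
    intro a b hab
    have h1 : ((e.symm a.1 : Fin n) : ℕ) = (e.symm b.1 : Fin n) := by simpa using hab
    exact Subtype.ext (e.symm.injective (Fin.ext h1))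
  simpa using Fintype.card_le_of_injective _ hinj
end
end
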